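/- arXiv:1811.05812 — 6 statements merged into one kernel-verified Lean document; each statement's English description precedes it below -/
import Mathlib

section
/- Let E be a real vector space, let A, B ⊆ E be arbitrary sets, and let l : E → ℝ be a linear functional. Then the set of maximizers of l on the Minkowski sum A + B equals the Minkowski sum of the sets of maximizers of l on A and on B: {x ∈ A + B | ∀ y ∈ A + B, l y ≤ l x} = {x ∈ A | ∀ y ∈ A, l y ≤ l x} + {x ∈ B | ∀ y ∈ B, l y ≤ l x}. -/
open Pointwise

section IsMaxOn

variable {M : Type*} [Add M] [Preorder M] [AddLeftMono M] [AddRightMono M]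
  [AddLeftReflectLE M] [AddRightReflectLE M]

theorem isMaxOn_prod_add_iff {α β : Type*} {f : α → M} {g : β → M} {s : Set α} {t : Set β}
    {a : α} {b : β} (ha : a ∈ s) (hb : b ∈ t) :
    IsMaxOn (fun p : α × β => f p.1 + g p.2) (s ×ˢ t) (a, b) ↔ IsMaxOn f s a ∧ IsMaxOn g t b := by
  simp only [isMaxOn_iff, Set.forall_prod_set]
  refine ⟨fun hmax => ⟨fun x hx => ?_, fun y hy => ?_⟩, fun ⟨hf, hg⟩ x hx y hy => ?_⟩
  · exact le_of_add_le_add_right (hmax x hx b hb)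
  · exact le_of_add_le_add_left (hmax a ha y hy)
  · exact add_le_add (hf x hx) (hg y hy)

variable {E F : Type*} [Add E] [FunLike F E M] [AddHomClass F E M]

theorem isMaxOn_set_add_iff (l : F) {A B : Set E} {a b : E} (ha : a ∈ A) (hb : b ∈ B) :
    IsMaxOn l (A + B) (a + b) ↔ IsMaxOn l A a ∧ IsMaxOn l B b := by
  rw [← isMaxOn_prod_add_iff ha hb]
  simp only [isMaxOn_iff, ← Set.add_image_prod, Set.forall_mem_image, map_add]

theorem maximizers_minkowski_sum_general (A B : Set E) (l : F) :
    {x ∈ A + B | ∀ y ∈ A + B, l y ≤ l x} =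
      {x ∈ A | ∀ y ∈ A, l y ≤ l x} + {x ∈ B | ∀ y ∈ B, l y ≤ l x} := by
  simp only [← isMaxOn_iff]
  apply Set.Subset.antisymm
  · rintro _ ⟨⟨a, ha, b, hb, rfl⟩, hmax⟩
    obtain ⟨hmaxA, hmaxB⟩ := (isMaxOn_set_add_iff l ha hb).mp hmax
    exact Set.add_mem_add ⟨ha, hmaxA⟩ ⟨hb, hmaxB⟩
  · rintro _ ⟨a, ⟨ha, hmaxA⟩, b, ⟨hb, hmaxB⟩, rfl⟩
    exact ⟨Set.add_mem_add ha hb, (isMaxOn_set_add_iff l ha hb).mpr ⟨hmaxA, hmaxB⟩⟩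

end IsMaxOn

theorem maximizers_minkowski_sum {E : Type*} [AddCommGroup E] [Module ℝ E]
    (A B : Set E) (l : E →ₗ[ℝ] ℝ) :
    {x ∈ A + B | ∀ y ∈ A + B, l y ≤ l x} =
      {x ∈ A | ∀ y ∈ A, l y ≤ l x} + {x ∈ B | ∀ y ∈ B, l y ≤ l x} :=
  maximizers_minkowski_sum_general A B l
end

section
/- Let E be a real normed vector space and A, B ⊆ E arbitrary sets. Every nonempty exposed face C of the Minkowski sum A + B decomposes as a Minkowski sum of exposed faces of the summands: there exist sets F and G such that F is a nonempty exposed face of A, G is a nonempty exposed face of B, and C = F + G. -/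
open Pointwise

theorem isMaxOn_add_iff {F M N : Type*} [Add M] [AddCommMonoid N] [Preorder N]
    [IsOrderedCancelAddMonoid N] [FunLike F M N] [AddHomClass F M N] (f : F) {A B : Set M}
    {a b : M} (ha : a ∈ A) (hb : b ∈ B) :
    IsMaxOn f (A + B) (a + b) ↔ IsMaxOn f A a ∧ IsMaxOn f B b := by
  simp only [isMaxOn_iff, ← Set.image2_add, Set.forall_mem_image2, map_add]
  constructor
  · intro hmax
    exact ⟨fun x hx ↦ le_of_add_le_add_right (hmax x hx b hb),
      fun y hy ↦ le_of_add_le_add_left (hmax a ha y hy)⟩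
  · rintro ⟨hmaxA, hmaxB⟩ x hx y hy
    exact add_le_add (hmaxA x hx) (hmaxB y hy)

section OrderedRing

variable {𝕜 E : Type*} [TopologicalSpace 𝕜] [Ring 𝕜] [PartialOrder 𝕜] [IsOrderedAddMonoid 𝕜]
  [AddCommMonoid E] [TopologicalSpace E] [Module 𝕜 E]

theorem toExposed_add (l : StrongDual 𝕜 E) (A B : Set E) :
    l.toExposed (A + B) = l.toExposed A + l.toExposed B := by
  apply Set.Subset.antisymm
  · rintro _ ⟨⟨a, ha, b, hb, rfl⟩, hmax⟩
    obtain ⟨hmaxA, hmaxB⟩ := (isMaxOn_add_iff l ha hb).1 hmax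
    exact Set.add_mem_add ⟨ha, hmaxA⟩ ⟨hb, hmaxB⟩
  · rintro _ ⟨a, ⟨ha, hmaxA⟩, b, ⟨hb, hmaxB⟩, rfl⟩
    exact ⟨Set.add_mem_add ha hb, (isMaxOn_add_iff l ha hb).2 ⟨hmaxA, hmaxB⟩⟩

theorem exposedFace_minkowski_sum_decomposition_general (A B C : Set E)
    (hC : IsExposed 𝕜 (A + B) C) (hCne : C.Nonempty) :
    ∃ F G : Set E, F.Nonempty ∧ IsExposed 𝕜 A F ∧ G.Nonempty ∧ IsExposed 𝕜 B G ∧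
      C = F + G := by
  obtain ⟨l, hCl⟩ := hC hCne
  have hsum : C = l.toExposed A + l.toExposed B := hCl.trans (toExposed_add l A B)
  obtain ⟨hF, hG⟩ := Set.add_nonempty.1 (hsum ▸ hCne)
  exact ⟨l.toExposed A, l.toExposed B, hF, ContinuousLinearMap.toExposed.isExposed,
    hG, ContinuousLinearMap.toExposed.isExposed, hsum⟩

end OrderedRing

theorem exposedFace_minkowski_sum_decomposition {E : Type*} [NormedAddCommGroup E]
    [NormedSpace ℝ E] (A B C : Set E) (hC : IsExposed ℝ (A + B) C) (hCne : C.Nonempty) :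
    ∃ F G : Set E, F.Nonempty ∧ IsExposed ℝ A F ∧ G.Nonempty ∧ IsExposed ℝ B G ∧
      C = F + G :=
  exposedFace_minkowski_sum_decomposition_general A B C hC hCne
end

section
/- Let E be a real vector space, A, B ⊆ E arbitrary sets, and u, v : E → ℝ linear functionals. Writing S^l := {x ∈ S | ∀ y ∈ S, l y ≤ l x}, iterated faces of a Minkowski sum decompose: ((A + B)^u)^v = (A^u)^v + (B^u)^v. -/
open Pointwise

/-- The set of points of `S` maximizing the linear functional `l`
(the face of `S` in direction `l`). -/
def dirFace {E : Type*} [AddCommGroup E] [Module ℝ E] (S : Set E) (l : E →ₗ[ℝ] ℝ) :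
    Set E :=
  {x ∈ S | ∀ y ∈ S, l y ≤ l x}

/-- The points of `S` at which `f` attains its maximum over `S`: the analogue of `dirFace` for a
function with values in any preorder. -/
def maximizers {E M : Type*} [Preorder M] (f : E → M) (S : Set E) : Set E :=
  {x ∈ S | IsMaxOn f S x}

theorem dirFace_eq_maximizers {E : Type*} [AddCommGroup E] [Module ℝ E] (S : Set E)
    (l : E →ₗ[ℝ] ℝ) : dirFace S l = maximizers l S :=
  rfl

section AddHom

variable {E M F : Type*} [Add E]
  [Add M] [Preorder M] [AddLeftMono M] [AddRightMono M] [AddLeftReflectLE M] [AddRightReflectLE M]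
  [FunLike F E M] [AddHomClass F E M]

theorem isMaxOn_add_add_iff (f : F) {A B : Set E} {a b : E} (ha : a ∈ A) (hb : b ∈ B) :
    IsMaxOn f (A + B) (a + b) ↔ IsMaxOn f A a ∧ IsMaxOn f B b := by
  simp only [isMaxOn_iff]
  constructor
  · intro hmax
    have hadd : ∀ a' ∈ A, ∀ b' ∈ B, f a' + f b' ≤ f a + f b := fun a' ha' b' hb' => by
      simpa only [map_add] using hmax (a' + b') (Set.add_mem_add ha' hb')
    exact ⟨fun a' ha' => le_of_add_le_add_right (hadd a' ha' b hb),
      fun b' hb' => le_of_add_le_add_left (hadd a ha b' hb')⟩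
  · rintro ⟨hmaxA, hmaxB⟩ _ ⟨a', ha', b', hb', rfl⟩
    simpa only [map_add] using add_le_add (hmaxA a' ha') (hmaxB b' hb')

theorem maximizers_add (f : F) (A B : Set E) :
    maximizers f (A + B) = maximizers f A + maximizers f B := by
  ext x
  constructor
  · rintro ⟨⟨a, ha, b, hb, rfl⟩, hmax⟩
    obtain ⟨hmaxA, hmaxB⟩ := (isMaxOn_add_add_iff f ha hb).mp hmax
    exact Set.add_mem_add ⟨ha, hmaxA⟩ ⟨hb, hmaxB⟩
  · rintro ⟨a, ⟨ha, hmaxA⟩, b, ⟨hb, hmaxB⟩, rfl⟩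
    exact ⟨Set.add_mem_add ha hb, (isMaxOn_add_add_iff f ha hb).mpr ⟨hmaxA, hmaxB⟩⟩

theorem iterated_faces_minkowski_sum_general {N G : Type*}
    [Add N] [Preorder N] [AddLeftMono N] [AddRightMono N] [AddLeftReflectLE N] [AddRightReflectLE N]
    [FunLike G E N] [AddHomClass G E N] (A B : Set E) (u : F) (v : G) :
    maximizers v (maximizers u (A + B)) =
      maximizers v (maximizers u A) + maximizers v (maximizers u B) := by
  rw [maximizers_add u, maximizers_add v]

end AddHom

theorem iterated_faces_minkowski_sum {E : Type*} [AddCommGroup E] [Module ℝ E]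
    (A B : Set E) (u v : E →ₗ[ℝ] ℝ) :
    dirFace (dirFace (A + B) u) v = dirFace (dirFace A u) v + dirFace (dirFace B u) v := by
  simpa only [dirFace_eq_maximizers] using iterated_faces_minkowski_sum_general A B u v
end

section
/- Let E be a real vector space and A, B ⊆ E arbitrary sets. If x is an extreme point of A + B, then its decomposition as a sum is unique: whenever a, a' ∈ A and b, b' ∈ B satisfy x = a + b and x = a' + b', one has a = a' and b = b'. -/
open Pointwise

section

variable {𝕜 E : Type*} [Semiring 𝕜] [LinearOrder 𝕜] [IsStrictOrderedRing 𝕜] [Invertible (2 : 𝕜)]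

theorem mem_openSegment_of_add_eq_add_self [AddCommMonoid E] [Module 𝕜 E] {x y z : E}
    (h : y + z = x + x) : x ∈ openSegment 𝕜 y z := by
  have half_pos : (0 : 𝕜) < ⅟2 := invOf_pos.2 two_pos
  refine ⟨⅟2, ⅟2, half_pos, half_pos, invOf_two_add_invOf_two, ?_⟩
  rw [← smul_add, h, smul_add, invOf_two_smul_add_invOf_two_smul]

theorem left_eq_of_mem_extremePoints_of_add_eq_add_self [AddCommMonoid E] [Module 𝕜 E]
    {S : Set E} {x y z : E} (hx : x ∈ S.extremePoints 𝕜) (hy : y ∈ S) (hz : z ∈ S)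
    (h : y + z = x + x) : y = x :=
  hx.2 hy hz (mem_openSegment_of_add_eq_add_self h)

theorem extremePoint_minkowski_sum_unique_decomposition_general [AddCancelCommMonoid E]
    [Module 𝕜 E] {A B : Set E} {x a a' b b' : E} (hx : x ∈ (A + B).extremePoints 𝕜)
    (ha : a ∈ A) (ha' : a' ∈ A) (hb : b ∈ B) (hb' : b' ∈ B) (hab : x = a + b)
    (hab' : x = a' + b') : a = a' ∧ b = b' := by
  -- Exchanging `b` and `b'` yields two points of `A + B` whose midpoint is `x`.
  have exchange_sum : (a + b') + (a' + b) = x + x :=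
    calc (a + b') + (a' + b) = (a + b) + (a' + b') := by abel
      _ = x + x := by rw [← hab, ← hab']
  have exchange_eq : a + b' = x :=
    left_eq_of_mem_extremePoints_of_add_eq_add_self hx (Set.add_mem_add ha hb')
      (Set.add_mem_add ha' hb) exchange_sum
  exact ⟨add_right_cancel (exchange_eq.trans hab'),
    add_left_cancel (hab.symm.trans exchange_eq.symm)⟩

end

theorem extremePoint_minkowski_sum_unique_decomposition {E : Type*} [AddCommGroup E]
    [Module ℝ E] (A B : Set E) (x : E) (hx : x ∈ Set.extremePoints ℝ (A + B))
    (a a' b b' : E) (ha : a ∈ A) (ha' : a' ∈ A) (hb : b ∈ B) (hb' : b' ∈ B)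
    (hab : x = a + b) (hab' : x = a' + b') :
    a = a' ∧ b = b' := by
  exact extremePoint_minkowski_sum_unique_decomposition_general hx ha ha' hb hb' hab hab'
end

section
/- Let E = EuclideanSpace ℝ (Fin 2) and let s, t ⊆ E be finite sets, with P = convexHull ℝ s and Q = convexHull ℝ t. Then the number of extreme points of P + Q is at most the number of extreme points of P plus the number of extreme points of Q: Set.ncard (Set.extremePoints ℝ (P + Q)) ≤ Set.ncard (Set.extremePoints ℝ P) + Set.ncard (Set.extremePoints ℝ Q). -/
open Pointwise

/-!
Traverse `P + Q` counterclockwise. A vertex `a + c` of `P + Q` splits into vertices `a` of `P` and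
`c` of `Q`, and the edge leaving it is parallel to the edge leaving `a` or to the edge leaving `c`;
charge `a + c` to that vertex of `P` or `Q`. No vertex is charged twice: a vertex `a` of `P`
determines the direction `e` of the edge leaving it, and `c` is determined by `e`, being the only
point of `Q` such that `Q` lies on the ray of direction `e` from it or strictly to the left of the
line through this ray.
-/

section ConvexGeometry

lemma left_mem_extremePoints_of_add_mem_extremePoints {𝕜 E : Type*} [Ring 𝕜] [PartialOrder 𝕜]
    [IsOrderedRing 𝕜] [AddCommGroup E] [Module 𝕜 E] {A B : Set E} {a b : E} (ha : a ∈ A)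
    (hb : b ∈ B) (h : a + b ∈ (A + B).extremePoints 𝕜) : a ∈ A.extremePoints 𝕜 := by
  refine ⟨ha, fun x hx y hy hxy ↦ add_right_cancel (b := b) ?_⟩
  refine h.2 (Set.add_mem_add hx hb) (Set.add_mem_add hy hb) ?_
  simpa only [add_comm _ b] using (mem_openSegment_translate 𝕜 b).2 hxy

variable {𝕜 E : Type*} [Field 𝕜] [LinearOrder 𝕜] [IsStrictOrderedRing 𝕜] [AddCommGroup E]
  [Module 𝕜 E]

lemma zero_mem_of_sum_smul_eq_zero {ι : Type*} {t : Finset ι} {w : ι → 𝕜} {z : ι → E} {C : Set E}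
    (hC : Convex 𝕜 C) (hw : ∀ i ∈ t, 0 ≤ w i) (hpos : 0 < ∑ i ∈ t, w i) (hz : ∀ i ∈ t, z i ∈ C)
    (h : ∑ i ∈ t, w i • z i = 0) : (0 : E) ∈ C := by
  simpa only [Finset.centerMass, h, smul_zero] using hC.centerMass_mem hw hpos hz

lemma not_sameRay_neg_of_zero_notMem {C : Set E} (hC : Convex 𝕜 C) (h0 : (0 : E) ∉ C) {u v : E}
    (hu : u ∈ C) (hv : v ∈ C) : ¬ SameRay 𝕜 u (-v) := by
  intro h
  obtain ⟨r, s, hr, hs, hrs⟩ := h.exists_pos (ne_of_mem_of_not_mem hu h0)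
    (neg_ne_zero.2 (ne_of_mem_of_not_mem hv h0))
  refine h0 (zero_mem_of_sum_smul_eq_zero (t := Finset.univ) (w := ![r, s]) (z := ![u, v]) hC
    ?_ ?_ ?_ ?_)
  · simp [Fin.forall_fin_two, hr.le, hs.le]
  · simpa using add_pos hr hs
  · simp [Fin.forall_fin_two, hu, hv]
  · simp [hrs]

lemma zero_notMem_convexHull_vadd_sdiff {S : Set E} {p : E}
    (hp : p ∈ (convexHull 𝕜 S).extremePoints 𝕜) : (0 : E) ∉ convexHull 𝕜 (-p +ᵥ S \ {p}) := by
  rw [convexHull_vadd, Set.mem_vadd_set_iff_neg_vadd_mem, neg_neg, vadd_eq_add, add_zero]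
  refine fun h ↦ ((convex_convexHull 𝕜 S).mem_extremePoints_iff_mem_sdiff_convexHull_sdiff.1 hp).2
    (convexHull_mono ?_ h)
  exact Set.sdiff_subset_sdiff_left (subset_convexHull 𝕜 S)

end ConvexGeometry

section AreaForm

variable {R E : Type*} [CommRing R] [AddCommGroup E] [Module R E]

/-- The oriented area of the parallelogram spanned by two vectors of the plane, in units of the
parallelogram spanned by the basis `b`: it is positive if the second vector points to the left of
the first. -/
noncomputable def areaForm (b : Module.Basis (Fin 2) R E) : E →ₗ[R] E →ₗ[R] R :=
  (b.coord 0).smulRight (b.coord 1) - (b.coord 1).smulRight (b.coord 0)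

lemma areaForm_apply (b : Module.Basis (Fin 2) R E) (u v : E) :
    areaForm b u v = b.repr u 0 * b.repr v 1 - b.repr u 1 * b.repr v 0 := by
  simp [areaForm]

lemma areaForm_isAlt (b : Module.Basis (Fin 2) R E) : (areaForm b).IsAlt := fun u ↦ by
  rw [areaForm_apply]; ring

lemma areaForm_smul_add_areaForm_smul_add_areaForm_smul (b : Module.Basis (Fin 2) R E)
    (u v w : E) : areaForm b v w • u + areaForm b w u • v + areaForm b u v • w = 0 := by
  refine b.ext_elem fun i ↦ ?_
  fin_cases i <;> simp [areaForm_apply] <;> ring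

lemma eq_zero_of_forall_areaForm_eq_zero (b : Module.Basis (Fin 2) R E) {v : E}
    (h : ∀ w, areaForm b v w = 0) : v = 0 := by
  refine b.ext_elem fun i ↦ ?_
  fin_cases i
  · simpa [areaForm_apply] using h (b 1)
  · simpa [areaForm_apply] using h (b 0)

lemma not_linearIndependent_of_areaForm_eq_zero [Nontrivial R] (b : Module.Basis (Fin 2) R E)
    {u v : E} (h : areaForm b u v = 0) : ¬ LinearIndependent R ![u, v] := by
  intro huv
  refine huv.ne_zero 1 (eq_zero_of_forall_areaForm_eq_zero b fun w ↦ ?_)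
  have hrel : areaForm b v w • u + areaForm b w u • v = 0 := by
    simpa [h] using areaForm_smul_add_areaForm_smul_add_areaForm_smul b u v w
  exact (LinearIndependent.pair_iff.1 huv _ _ hrel).1

end AreaForm

section Plane

variable {𝕜 E : Type*} [Field 𝕜] [LinearOrder 𝕜] [IsStrictOrderedRing 𝕜] [AddCommGroup E]
  [Module 𝕜 E] {b : Module.Basis (Fin 2) 𝕜 E}

lemma areaForm_eq_zero_of_sameRay {u v : E} (h : SameRay 𝕜 u v) : areaForm b u v = 0 := by
  obtain ⟨e, r, s, -, -, -, rfl, rfl⟩ := h.exists_eq_smul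
  simp [(areaForm_isAlt b).self_eq_zero]

lemma sameRay_of_areaForm_eq_zero {C : Set E} (hC : Convex 𝕜 C) (h0 : (0 : E) ∉ C) {u v : E}
    (hu : u ∈ C) (hv : v ∈ C) (h : areaForm b u v = 0) : SameRay 𝕜 u v :=
  (sameRay_or_sameRay_neg_iff_not_linearIndependent.2
    (not_linearIndependent_of_areaForm_eq_zero b h)).resolve_right
      (not_sameRay_neg_of_zero_notMem hC h0 hu hv)

lemma areaForm_nonneg_trans {C : Set E} (hC : Convex 𝕜 C) (h0 : (0 : E) ∉ C) {u v w : E}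
    (hu : u ∈ C) (hv : v ∈ C) (hw : w ∈ C) (huv : 0 ≤ areaForm b u v)
    (hvw : 0 ≤ areaForm b v w) : 0 ≤ areaForm b u w := by
  by_contra! huw
  -- Otherwise `0 = ω(v, w) u + ω(w, u) v + ω(u, v) w` is a nonnegative combination in `C`.
  have hwu : 0 < areaForm b w u := by rw [← (areaForm_isAlt b).neg]; exact neg_pos.2 huw
  refine h0 (zero_mem_of_sum_smul_eq_zero (t := Finset.univ) hC
    (w := ![areaForm b v w, areaForm b w u, areaForm b u v]) (z := ![u, v, w]) ?_ ?_ ?_ ?_)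
  · simp [Fin.forall_fin_succ, huv, hvw, hwu.le]
  · simpa [Fin.sum_univ_three] using by positivity
  · simp [Fin.forall_fin_succ, hu, hv, hw]
  · simpa [Fin.sum_univ_three] using areaForm_smul_add_areaForm_smul_add_areaForm_smul b u v w

lemma exists_forall_areaForm_nonneg (b : Module.Basis (Fin 2) 𝕜 E) {D : Set E} (hD : D.Finite)
    (hne : D.Nonempty) (h0 : (0 : E) ∉ convexHull 𝕜 D) : ∃ e ∈ D, ∀ v ∈ D, 0 ≤ areaForm b e v := by
  let r : D → D → Prop := fun v u ↦ 0 ≤ areaForm b u v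
  have mem_hull (u : D) : (u : E) ∈ convexHull 𝕜 D := subset_convexHull 𝕜 D u.2
  have : IsTrans D r := ⟨fun w v u hwv hvu ↦ areaForm_nonneg_trans (convex_convexHull 𝕜 D) h0
    (mem_hull u) (mem_hull v) (mem_hull w) hvu hwv⟩
  have directed : Directed r id := fun u v ↦ by
    rcases le_total 0 (areaForm b (u : E) v) with h | h
    · exact ⟨u, by simp [r, (areaForm_isAlt b).self_eq_zero], h⟩
    · refine ⟨v, ?_, by simp [r, (areaForm_isAlt b).self_eq_zero]⟩
      change 0 ≤ areaForm b (v : E) u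
      rw [← (areaForm_isAlt b).neg]
      exact neg_nonneg.2 h
  have := hD.to_subtype
  have := hne.to_subtype
  obtain ⟨e, he⟩ := directed.finite_le id
  exact ⟨e, e.2, fun v hv ↦ he ⟨v, hv⟩⟩

/-- Every point of `S` lies on the ray from `p` in direction `e` or strictly to the left of the
line through `p` in this direction. Only the half of that line in direction `e` is allowed, so that
among the points of an edge of direction `e` just the starting point qualifies as `p`. -/
def IsSupportingRay (b : Module.Basis (Fin 2) 𝕜 E) (S : Set E) (p e : E) : Prop :=
  ∀ x ∈ S, SameRay 𝕜 e (x - p) ∨ 0 < areaForm b e (x - p)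

namespace IsSupportingRay

variable {S T : Set E} {p q e e' x : E}

lemma areaForm_nonneg (h : IsSupportingRay b S p e) (hx : x ∈ S) : 0 ≤ areaForm b e (x - p) :=
  (h x hx).elim (fun hray ↦ (areaForm_eq_zero_of_sameRay hray).ge) le_of_lt

lemma sameRay (h : IsSupportingRay b S p e) (hx : x ∈ S) (h0 : areaForm b e (x - p) = 0) :
    SameRay 𝕜 e (x - p) :=
  (h x hx).resolve_right h0.not_gt

lemma of_sameRay (h : IsSupportingRay b S p e) (he : e ≠ 0) (he' : e' ≠ 0)
    (hee' : SameRay 𝕜 e e') : IsSupportingRay b S p e' := by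
  obtain ⟨r, hr, rfl⟩ := hee'.exists_pos_left he he'
  refine fun x hx ↦ (h x hx).imp (fun hray ↦ hray.pos_smul_left hr) fun hpos ↦ ?_
  simpa using mul_pos hr hpos

lemma apex_unique (hp : IsSupportingRay b S p e) (hq : IsSupportingRay b S q e) (he : e ≠ 0)
    (hpS : p ∈ S) (hqS : q ∈ S) : p = q := by
  have hswap : areaForm b e (p - q) = -areaForm b e (q - p) := by rw [← map_neg, neg_sub]
  have hzero : areaForm b e (q - p) = 0 :=
    le_antisymm (neg_nonneg.1 (hswap ▸ hq.areaForm_nonneg hpS)) (hp.areaForm_nonneg hqS)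
  have hpq : SameRay 𝕜 e (q - p) := hp.sameRay hqS hzero
  have hqp : SameRay 𝕜 e (-(q - p)) := by
    rw [neg_sub]; exact hq.sameRay hpS (by rw [hswap, hzero, neg_zero])
  exact (sub_eq_zero.1 <| eq_zero_of_sameRay_self_neg <|
    hpq.symm.trans hqp fun h ↦ (he h).elim).symm

lemma left_of_add (h : IsSupportingRay b (S + T) (p + q) e) (hq : q ∈ T) :
    IsSupportingRay b S p e := fun x hx ↦ by
  simpa only [add_sub_add_right_eq_sub] using h (x + q) (Set.add_mem_add hx hq)

lemma right_of_add (h : IsSupportingRay b (S + T) (p + q) e) (hp : p ∈ S) :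
    IsSupportingRay b T q e := by
  rw [add_comm S, add_comm p] at h
  exact h.left_of_add hp

end IsSupportingRay

/-- The point `x ≠ p` of `S` lies on the edge of the convex hull of `S` that leaves the vertex `p`
in the counterclockwise traversal. It need not be the other endpoint of this edge: only the
direction `x - p` matters. -/
structure IsOnLeavingEdge (b : Module.Basis (Fin 2) 𝕜 E) (S : Set E) (p x : E) : Prop where
  mem : x ∈ S
  ne : x ≠ p
  isSupportingRay : IsSupportingRay b S p (x - p)

namespace IsOnLeavingEdge

variable {S : Set E} {p x y : E}

lemma of_isSupportingRay {e : E} (h : IsSupportingRay b S p e) (he : e ≠ 0) (hx : x ∈ S)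
    (hxp : x ≠ p) (hray : SameRay 𝕜 e (x - p)) : IsOnLeavingEdge b S p x :=
  ⟨hx, hxp, h.of_sameRay he (sub_ne_zero.2 hxp) hray⟩

lemma direction_ne_zero (h : IsOnLeavingEdge b S p x) : x - p ≠ 0 := sub_ne_zero.2 h.ne

lemma sameRay (hx : IsOnLeavingEdge b S p x) (hy : IsOnLeavingEdge b S p y) :
    SameRay 𝕜 (x - p) (y - p) := by
  refine hx.isSupportingRay.sameRay hy.mem
    (le_antisymm ?_ (hx.isSupportingRay.areaForm_nonneg hy.mem))
  rw [← (areaForm_isAlt b).neg]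
  exact neg_nonpos.2 (hy.isSupportingRay.areaForm_nonneg hx.mem)

end IsOnLeavingEdge

lemma exists_isOnLeavingEdge (b : Module.Basis (Fin 2) 𝕜 E) {S : Set E} (hS : S.Finite) {p : E}
    (hp : p ∈ (convexHull 𝕜 S).extremePoints 𝕜) (hne : (S \ {p}).Nonempty) :
    ∃ x, IsOnLeavingEdge b S p x := by
  have h0 := zero_notMem_convexHull_vadd_sdiff hp
  have sub_mem {y : E} (hy : y ∈ S \ {p}) : y - p ∈ -p +ᵥ S \ {p} :=
    ⟨y, hy, neg_add_eq_sub p y⟩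
  obtain ⟨e, he, hmin⟩ := exists_forall_areaForm_nonneg b
    (hS.sdiff.vadd_set (a := -p)) hne.vadd_set h0
  obtain ⟨x, hx, rfl : -p + x = e⟩ := he
  rw [neg_add_eq_sub] at hmin
  refine ⟨x, hx.1, hx.2, fun y hy ↦ ?_⟩
  by_cases hyp : y = p
  · left
    rw [hyp, sub_self]
    exact SameRay.zero_right _
  · have hy' := sub_mem ⟨hy, hyp⟩
    exact (hmin _ hy').eq_or_lt.imp_left fun hzero ↦
      sameRay_of_areaForm_eq_zero (convex_convexHull 𝕜 _) h0 (subset_convexHull 𝕜 _ (sub_mem hx))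
        (subset_convexHull 𝕜 _ hy') hzero.symm

/-- The points `a + c` of `s + t`, with `a` a vertex of `s`, at which a counterclockwise traversal
of `s + t` turns into the direction of the edge of `s` leaving `a`. They are the points charged
to `s`. -/
def chargedTo (b : Module.Basis (Fin 2) 𝕜 E) (s t : Set E) : Set E :=
  {p | ∃ a ∈ (convexHull 𝕜 s).extremePoints 𝕜, ∃ c ∈ t, a + c = p ∧
    ∃ x, IsOnLeavingEdge b s a x ∧ IsSupportingRay b t c (x - a)}

lemma finite_chargedTo (b : Module.Basis (Fin 2) 𝕜 E) {s t : Set E} (hs : s.Finite)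
    (ht : t.Finite) : (chargedTo b s t).Finite := by
  refine (hs.add ht).subset ?_
  rintro _ ⟨a, ha, c, hc, rfl, -⟩
  exact Set.add_mem_add (extremePoints_convexHull_subset ha) hc

lemma ncard_chargedTo_le (b : Module.Basis (Fin 2) 𝕜 E) {s : Set E} (hs : s.Finite) (t : Set E) :
    (chargedTo b s t).ncard ≤ ((convexHull 𝕜 s).extremePoints 𝕜).ncard := by
  choose! a ha c hc hac x hx hray using fun p (hp : p ∈ chargedTo b s t) ↦ hp
  refine Set.ncard_le_ncard_of_injOn a ha (fun p hp q hq hpq ↦ ?_)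
    (hs.subset extremePoints_convexHull_subset)
  have hedge : IsOnLeavingEdge b s (a p) (x q) := hpq ▸ hx q hq
  have hray' : IsSupportingRay b t (c p) (x q - a p) :=
    (hray p hp).of_sameRay (hx p hp).direction_ne_zero hedge.direction_ne_zero
      ((hx p hp).sameRay hedge)
  have hcc : c p = c q :=
    hray'.apex_unique (hpq ▸ hray q hq) hedge.direction_ne_zero (hc p hp) (hc q hq)
  rw [← hac p hp, ← hac q hq, hpq, hcc]

lemma IsOnLeavingEdge.of_add {s t : Set E} {a c z : E} (h : IsOnLeavingEdge b (s + t) (a + c) z)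
    (ha : a ∈ s) (hc : c ∈ t) :
    (∃ x, IsOnLeavingEdge b s a x ∧ IsSupportingRay b t c (x - a)) ∨
      ∃ y, IsOnLeavingEdge b t c y ∧ IsSupportingRay b s a (y - c) := by
  obtain ⟨⟨x, hx, y, hy, rfl : x + y = z⟩, hne, hray⟩ := h
  have he := sub_ne_zero.2 hne
  have hs := hray.left_of_add hc
  have ht := hray.right_of_add ha
  have hsum : areaForm b (x + y - (a + c)) (x - a) + areaForm b (x + y - (a + c)) (y - c) = 0 := by
    rw [← map_add, ← add_sub_add_comm, (areaForm_isAlt b).self_eq_zero]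
  obtain ⟨hx0, hy0⟩ :=
    (add_eq_zero_iff_of_nonneg (hs.areaForm_nonneg hx) (ht.areaForm_nonneg hy)).1 hsum
  have hsx := hs.sameRay hx hx0
  have hty := ht.sameRay hy hy0
  by_cases hxa : x = a
  · have hyc : y ≠ c := fun hyc ↦ hne (by rw [hxa, hyc])
    exact .inr ⟨y, .of_isSupportingRay ht he hy hyc hty, hs.of_sameRay he (sub_ne_zero.2 hyc) hty⟩
  · exact .inl ⟨x, .of_isSupportingRay hs he hx hxa hsx, ht.of_sameRay he (sub_ne_zero.2 hxa) hsx⟩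

lemma exists_add_eq_of_mem_extremePoints_convexHull_add {s t : Set E} {p : E}
    (hp : p ∈ (convexHull 𝕜 (s + t)).extremePoints 𝕜) :
    ∃ a ∈ s, ∃ c ∈ t, a + c = p ∧ a ∈ (convexHull 𝕜 s).extremePoints 𝕜 ∧
      c ∈ (convexHull 𝕜 t).extremePoints 𝕜 := by
  obtain ⟨a, ha, c, hc, rfl⟩ := extremePoints_convexHull_subset hp
  have ha' := subset_convexHull 𝕜 s ha
  have hc' := subset_convexHull 𝕜 t hc
  rw [convexHull_add] at hp
  refine ⟨a, ha, c, hc, rfl, left_mem_extremePoints_of_add_mem_extremePoints ha' hc' hp,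
    left_mem_extremePoints_of_add_mem_extremePoints hc' ha' ?_⟩
  rwa [add_comm c, add_comm (convexHull 𝕜 t)]

lemma extremePoints_convexHull_add_subset_chargedTo_union (b : Module.Basis (Fin 2) 𝕜 E)
    {s t : Set E} (hs : s.Finite) (ht : t.Finite)
    (hnt : ((convexHull 𝕜 (s + t)).extremePoints 𝕜).Nontrivial) :
    (convexHull 𝕜 (s + t)).extremePoints 𝕜 ⊆ chargedTo b s t ∪ chargedTo b t s := by
  intro p hp
  obtain ⟨a, ha, c, hc, rfl, ha_ext, hc_ext⟩ :=
    exists_add_eq_of_mem_extremePoints_convexHull_add hp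
  obtain ⟨q, hq, hqp⟩ := hnt.exists_ne (a + c)
  obtain ⟨z, hz⟩ := exists_isOnLeavingEdge b (hs.add ht) hp
    ⟨q, extremePoints_convexHull_subset hq, hqp⟩
  exact (hz.of_add ha hc).imp (fun h ↦ ⟨a, ha_ext, c, hc, rfl, h⟩)
    fun h ↦ ⟨c, hc_ext, a, ha, add_comm c a, h⟩

theorem ncard_extremePoints_minkowski_sum_polygons_general (hE : Module.finrank 𝕜 E = 2)
    {s t : Set E} (hs : s.Finite) (ht : t.Finite) :
    ((convexHull 𝕜 s + convexHull 𝕜 t).extremePoints 𝕜).ncard ≤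
      ((convexHull 𝕜 s).extremePoints 𝕜).ncard + ((convexHull 𝕜 t).extremePoints 𝕜).ncard := by
  have : Module.Finite 𝕜 E := Module.finite_of_finrank_pos (by rw [hE]; exact two_pos)
  let b := Module.finBasisOfFinrankEq 𝕜 E hE
  rw [← convexHull_add]
  rcases ((convexHull 𝕜 (s + t)).extremePoints 𝕜).subsingleton_or_nontrivial with hsub | hnt
  · obtain hempty | ⟨p, hp⟩ := hsub.eq_empty_or_singleton
    · simp [hempty]
    · obtain ⟨a, -, -, -, -, ha, -⟩ :=
        exists_add_eq_of_mem_extremePoints_convexHull_add (hp ▸ Set.mem_singleton p)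
      have hpos := (Set.ncard_pos (hs.subset extremePoints_convexHull_subset)).2 ⟨a, ha⟩
      rw [hp, Set.ncard_singleton]
      exact le_add_right hpos
  · calc ((convexHull 𝕜 (s + t)).extremePoints 𝕜).ncard
      _ ≤ (chargedTo b s t ∪ chargedTo b t s).ncard :=
        Set.ncard_le_ncard (extremePoints_convexHull_add_subset_chargedTo_union b hs ht hnt)
          ((finite_chargedTo b hs ht).union (finite_chargedTo b ht hs))
      _ ≤ (chargedTo b s t).ncard + (chargedTo b t s).ncard := Set.ncard_union_le _ _
      _ ≤ _ := add_le_add (ncard_chargedTo_le b hs t) (ncard_chargedTo_le b ht s)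

end Plane

theorem ncard_extremePoints_minkowski_sum_polygons
    (s t : Set (EuclideanSpace ℝ (Fin 2))) (hs : s.Finite) (ht : t.Finite)
    (P Q : Set (EuclideanSpace ℝ (Fin 2)))
    (hP : P = convexHull ℝ s) (hQ : Q = convexHull ℝ t) :
    Set.ncard (Set.extremePoints ℝ (P + Q)) ≤
      Set.ncard (Set.extremePoints ℝ P) + Set.ncard (Set.extremePoints ℝ Q) := by
  subst hP hQ
  exact ncard_extremePoints_minkowski_sum_polygons_general finrank_euclideanSpace_fin hs ht
end

section
/- Let E = EuclideanSpace ℝ (Fin 2), let I be a finite nonempty index set, and let s : I → Set E be a family of finite sets, with P i = convexHull ℝ (s i) for each i. Then the number of extreme points of the Minkowski sum ∑_{i ∈ I} P i is at most the sum of the numbers of extreme points of the P i: Set.ncard (Set.extremePoints ℝ (∑_{i ∈ I} P i)) ≤ ∑_{i ∈ I} Set.ncard (Set.extremePoints ℝ (P i)). -/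
open Pointwise

/-!
List the edges of a polygon counterclockwise, so that every vertex is the start of exactly one edge.
The edge of `P + Q` starting at a vertex `p + q` is the sum of a face of `P` starting at `p` and a
face of `Q` starting at `q`, and at least one of the two is an edge in the same direction. Charge
the vertex to `p` or to `q` accordingly. No vertex `p` of `P` is charged twice: `p` determines the
direction of the edge, and `q` must be the first point of `Q` on the supporting line in that
direction.
-/

section ExtremePoints

variable {𝕜 E : Type*} [AddCommGroup E]

section OrderedSemiring

variable [Semiring 𝕜] [PartialOrder 𝕜] [Module 𝕜 E]

lemma left_mem_extremePoints_of_add {P Q : Set E} {p q : E} (hp : p ∈ P) (hq : q ∈ Q)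
    (h : p + q ∈ (P + Q).extremePoints 𝕜) : p ∈ P.extremePoints 𝕜 := by
  refine ⟨hp, fun x hx y hy hpxy ↦ ?_⟩
  have hmem : p + q ∈ openSegment 𝕜 (x + q) (y + q) := by
    obtain ⟨a, b, ha, hb, hab, rfl⟩ := hpxy
    refine ⟨a, b, ha, hb, hab, ?_⟩
    rw [smul_add, smul_add, add_add_add_comm, ← add_smul, hab, one_smul]
  exact add_right_cancel (h.2 (Set.add_mem_add hx hq) (Set.add_mem_add hy hq) hmem)

lemma ncard_extremePoints_add_le_of_subsingleton {P Q : Set E}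
    (hPQ : ((P + Q).extremePoints 𝕜).Subsingleton) (hP : (P.extremePoints 𝕜).Finite) :
    ((P + Q).extremePoints 𝕜).ncard ≤ (P.extremePoints 𝕜).ncard := by
  rcases ((P + Q).extremePoints 𝕜).eq_empty_or_nonempty with hempty | ⟨v, hv⟩
  · simp only [hempty, Set.ncard_empty, zero_le]
  · obtain ⟨p, hp, q, hq, rfl⟩ := hv.1
    have hle : ((P + Q).extremePoints 𝕜).ncard ≤ 1 :=
      (Set.ncard_le_one hPQ.finite).2 hPQ
    exact hle.trans ((Set.ncard_pos hP).2 ⟨p, left_mem_extremePoints_of_add hp hq hv⟩)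

end OrderedSemiring

variable [Field 𝕜] [LinearOrder 𝕜] [IsStrictOrderedRing 𝕜] [Module 𝕜 E]

lemma nonneg_of_add_smul_mem_of_mem_extremePoints {R : Set E} {v d : E} {t : 𝕜}
    (hv : v ∈ R.extremePoints 𝕜) (hd : d ≠ 0) (hvd : v + d ∈ R) (hvt : v + t • d ∈ R) :
    0 ≤ t := by
  by_contra! ht
  have hpos : 0 < 1 - t := by linarith
  have hmem : v ∈ openSegment 𝕜 (v + d) (v + t • d) := by
    refine ⟨-t / (1 - t), 1 / (1 - t), div_pos (neg_pos.2 ht) hpos, one_div_pos.2 hpos,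
      by field_simp; ring, ?_⟩
    match_scalars <;> field_simp <;> ring
  exact hd (add_eq_left.1 (hv.2 hvd hvt hmem))

lemma finite_extremePoints_convexHull {S : Set E} (hS : S.Finite) :
    ((convexHull 𝕜 S).extremePoints 𝕜).Finite :=
  hS.subset extremePoints_convexHull_subset

lemma notMem_convexHull_sdiff_of_mem_extremePoints {S : Set E} {v : E}
    (hv : v ∈ (convexHull 𝕜 S).extremePoints 𝕜) : v ∉ convexHull 𝕜 (S \ {v}) := fun h ↦
  ((convex_convexHull 𝕜 S).mem_extremePoints_iff_mem_sdiff_convexHull_sdiff.1 hv).2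
    (convexHull_mono (Set.sdiff_subset_sdiff_left (subset_convexHull 𝕜 S)) h)

end ExtremePoints

section SignedArea

variable {𝕜 E : Type*} [AddCommGroup E]

section CommRing

variable [CommRing 𝕜] [Module 𝕜 E]

/-- The signed area of the parallelogram spanned by two vectors of a plane, measured in the
coordinates of `b`. It is curried, so that `signedArea b d` is the linear functional that is
constant on the lines of direction `d` and positive to the left of `d`. -/
noncomputable def signedArea (b : Module.Basis (Fin 2) 𝕜 E) : E →ₗ[𝕜] E →ₗ[𝕜] 𝕜 :=
  (b.coord 0).smulRight (b.coord 1) - (b.coord 1).smulRight (b.coord 0)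

variable (b : Module.Basis (Fin 2) 𝕜 E)

lemma signedArea_apply (x y : E) :
    signedArea b x y = b.repr x 0 * b.repr y 1 - b.repr x 1 * b.repr y 0 := by
  simp [signedArea]

lemma signedArea_self (x : E) : signedArea b x x = 0 := by
  rw [signedArea_apply]; ring

lemma signedArea_swap (x y : E) : signedArea b x y = -signedArea b y x := by
  simp only [signedArea_apply]; ring

lemma signedArea_smul_cyclic (x y z : E) :
    signedArea b y z • x + signedArea b z x • y + signedArea b x y • z = 0 := by
  refine b.ext_elem fun i ↦ ?_
  fin_cases i <;> simp [signedArea_apply] <;> ring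

end CommRing

variable [Field 𝕜] [Module 𝕜 E] {b : Module.Basis (Fin 2) 𝕜 E}

lemma exists_eq_smul_of_signedArea_eq_zero {d x : E} (hd : d ≠ 0) (h : signedArea b d x = 0) :
    ∃ t : 𝕜, x = t • d := by
  obtain ⟨y, hy⟩ : ∃ y, signedArea b d y ≠ 0 := by
    by_contra! hzero
    refine hd (b.ext_elem fun i ↦ ?_)
    have h₀ := hzero (b 0)
    have h₁ := hzero (b 1)
    fin_cases i <;> simp_all [signedArea_apply]
  have hcyc := signedArea_smul_cyclic b d y x
  rw [signedArea_swap b x d, h, neg_zero, zero_smul, add_zero] at hcyc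
  refine ⟨-(signedArea b d y)⁻¹ * signedArea b y x, ?_⟩
  rw [mul_smul, eq_neg_of_add_eq_zero_left hcyc, smul_neg, neg_smul, neg_neg, inv_smul_smul₀ hy]

variable [LinearOrder 𝕜] [IsStrictOrderedRing 𝕜]

lemma signedArea_nonneg_trans {T : Set E} (hT : 0 ∉ convexHull 𝕜 T) {x y z : E} (hx : x ∈ T)
    (hy : y ∈ T) (hz : z ∈ T) (hxy : 0 ≤ signedArea b x y) (hyz : 0 ≤ signedArea b y z) :
    0 ≤ signedArea b x z := by
  by_contra! hxz
  have hzx : 0 < signedArea b z x := by rw [signedArea_swap]; exact neg_pos.2 hxz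
  -- The cyclic identity now exhibits `0` as a convex combination of `x`, `y`, `z`.
  have hmem := Finset.univ.centerMass_mem_convexHull (R := 𝕜) (s := T)
    (w := ![signedArea b y z, signedArea b z x, signedArea b x y]) (z := ![x, y, z])
    (by simp [Fin.forall_fin_succ, hxy, hyz, hzx.le])
    (by simp only [Fin.sum_univ_three, Matrix.cons_val]; linarith)
    (by simp [Fin.forall_fin_succ, hx, hy, hz])
  simp only [Finset.centerMass, Fin.sum_univ_three, Matrix.cons_val, signedArea_smul_cyclic,
    smul_zero] at hmem
  exact hT hmem

lemma exists_forall_signedArea_nonneg {T : Set E} (hfin : T.Finite) (hne : T.Nonempty)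
    (hT : 0 ∉ convexHull 𝕜 T) : ∃ w ∈ T, ∀ x ∈ T, 0 ≤ signedArea b w x := by
  induction T, hfin using Set.Finite.induction_on with
  | empty => exact absurd hne Set.not_nonempty_empty
  | @insert a T _ _ ih =>
    rcases T.eq_empty_or_nonempty with rfl | hne'
    · exact ⟨a, by simp, by simp [signedArea_self]⟩
    obtain ⟨w, hw, hmin⟩ := ih hne' fun h ↦ hT (convexHull_mono (Set.subset_insert a T) h)
    have haT : a ∈ insert a T := Set.mem_insert a T
    have hwT : w ∈ insert a T := Set.mem_insert_of_mem a hw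
    rcases le_total 0 (signedArea b w a) with hwa | hwa
    · exact ⟨w, hwT, Set.forall_mem_insert.2 ⟨hwa, hmin⟩⟩
    · have haw : 0 ≤ signedArea b a w := by rw [signedArea_swap]; exact neg_nonneg.2 hwa
      exact ⟨a, haT, Set.forall_mem_insert.2 ⟨(signedArea_self b a).ge, fun x hx ↦
        signedArea_nonneg_trans hT haT hwT (Set.mem_insert_of_mem a hx) haw (hmin x hx)⟩⟩

end SignedArea

section Edges

variable {𝕜 E : Type*} [Field 𝕜] [LinearOrder 𝕜] [IsStrictOrderedRing 𝕜] [AddCommGroup E]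
  [Module 𝕜 E]

/-- `d` points from the vertex `v` of `R` along the edge of `R` starting at `v` when the boundary is
traversed counterclockwise for the orientation of `b`: the set `R` lies to the left of the line
through `v` with direction `d`. The length of `d` is not fixed, only that `v + d` still belongs to
the edge, and being a vertex is not part of the definition. -/
structure IsCcwEdge (b : Module.Basis (Fin 2) 𝕜 E) (R : Set E) (v d : E) : Prop where
  ne_zero : d ≠ 0
  add_mem : v + d ∈ R
  isMinOn : IsMinOn (signedArea b d) R v

/-- The vertices `p + q` of `P + Q` that are charged to the vertex `p` of `P`, because the
counterclockwise edge of `P + Q` starting there is parallel to the one of `P` starting at `p`. -/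
def verticesChargedTo (b : Module.Basis (Fin 2) 𝕜 E) (P Q : Set E) : Set E :=
  {v ∈ (P + Q).extremePoints 𝕜 | ∃ p ∈ P, ∃ q ∈ Q, p + q = v ∧
    ∃ d, IsCcwEdge b P p d ∧ IsMinOn (signedArea b d) Q q}

variable {b : Module.Basis (Fin 2) 𝕜 E}

lemma isMinOn_left_of_add {P Q : Set E} {p q : E} {f : E →ₗ[𝕜] 𝕜} (hq : q ∈ Q)
    (h : IsMinOn f (P + Q) (p + q)) : IsMinOn f P p := fun x hx ↦ by
  simpa using h (Set.add_mem_add hx hq)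

lemma isMinOn_signedArea_smul_iff {R : Set E} {v d : E} {t : 𝕜} (ht : 0 < t) :
    IsMinOn (signedArea b (t • d)) R v ↔ IsMinOn (signedArea b d) R v := by
  simp [isMinOn_iff, ht]

lemma IsCcwEdge.smul {R : Set E} {v d : E} {t : 𝕜} (ht : 0 < t) (hd : d ≠ 0)
    (hmem : v + t • d ∈ R) (hmin : IsMinOn (signedArea b d) R v) : IsCcwEdge b R v (t • d) :=
  ⟨smul_ne_zero ht.ne' hd, hmem, (isMinOn_signedArea_smul_iff ht).2 hmin⟩

lemma exists_isCcwEdge_convexHull {S : Set E} (hfin : S.Finite) (hS : S.Nontrivial) {v : E}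
    (hv : v ∈ (convexHull 𝕜 S).extremePoints 𝕜) : ∃ d, IsCcwEdge b (convexHull 𝕜 S) v d := by
  have hzero : 0 ∉ convexHull 𝕜 (-v +ᵥ S \ {v}) := by
    rw [convexHull_vadd, Set.mem_neg_vadd_set_iff, vadd_eq_add, add_zero]
    exact notMem_convexHull_sdiff_of_mem_extremePoints hv
  have hne : (-v +ᵥ S \ {v}).Nonempty :=
    let ⟨x, hx, hxv⟩ := hS.exists_ne v
    ⟨-v +ᵥ x, Set.vadd_mem_vadd_set ⟨hx, hxv⟩⟩
  obtain ⟨d, hd, hmin⟩ := exists_forall_signedArea_nonneg (b := b)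
    ((hfin.subset Set.sdiff_subset).vadd_set (a := -v)) hne hzero
  have hvd : v + d ∈ S \ {v} := by rwa [Set.mem_neg_vadd_set_iff] at hd
  have hminS : S ⊆ {x | signedArea b d v ≤ signedArea b d x} := by
    intro x hx
    rcases eq_or_ne x v with rfl | hxv
    · exact le_rfl
    · have hnonneg : 0 ≤ signedArea b d (x - v) := by
        rw [← neg_add_eq_sub]; exact hmin _ (Set.vadd_mem_vadd_set ⟨hx, hxv⟩)
      rwa [map_sub, sub_nonneg] at hnonneg
  refine ⟨d, fun hd0 ↦ hvd.2 (by simp [hd0]), subset_convexHull 𝕜 S hvd.1, ?_⟩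
  exact convexHull_min hminS (convex_halfSpace_ge (signedArea b d).isLinear _)

lemma IsCcwEdge.exists_pos_smul {P : Set E} {p d d' : E} (hp : p ∈ P.extremePoints 𝕜)
    (hd : IsCcwEdge b P p d) (hd' : IsCcwEdge b P p d') : ∃ t : 𝕜, 0 < t ∧ d' = t • d := by
  have h : 0 ≤ signedArea b d d' := by simpa using hd.isMinOn hd'.add_mem
  have h' : 0 ≤ signedArea b d' d := by simpa using hd'.isMinOn hd.add_mem
  rw [signedArea_swap, neg_nonneg] at h'
  obtain ⟨t, rfl⟩ := exists_eq_smul_of_signedArea_eq_zero hd.ne_zero (h'.antisymm h)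
  have ht : 0 ≤ t :=
    nonneg_of_add_smul_mem_of_mem_extremePoints hp hd.ne_zero hd.add_mem hd'.add_mem
  exact ⟨t, ht.lt_of_ne' (left_ne_zero_of_smul hd'.ne_zero), rfl⟩

lemma IsCcwEdge.eq_of_isMinOn {P Q : Set E} {p q q' d : E} (hd : IsCcwEdge b P p d)
    (hq : q ∈ Q) (hq' : q' ∈ Q) (hv : p + q ∈ (P + Q).extremePoints 𝕜)
    (hv' : p + q' ∈ (P + Q).extremePoints 𝕜) (hmin : IsMinOn (signedArea b d) Q q)
    (hmin' : IsMinOn (signedArea b d) Q q') : q = q' := by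
  have hzero : signedArea b d (q' - q) = 0 := by
    rw [map_sub, sub_eq_zero]
    exact (hmin' hq).antisymm (hmin hq')
  obtain ⟨t, ht⟩ := exists_eq_smul_of_signedArea_eq_zero hd.ne_zero hzero
  obtain rfl : q' = q + t • d := by rw [← ht, add_sub_cancel]
  have hnonneg : 0 ≤ t := by
    refine nonneg_of_add_smul_mem_of_mem_extremePoints hv hd.ne_zero ?_ ?_
    · rw [add_right_comm]; exact Set.add_mem_add hd.add_mem hq
    · rw [add_assoc]; exact hv'.1
  have hnonpos : 0 ≤ -t := by
    refine nonneg_of_add_smul_mem_of_mem_extremePoints hv' hd.ne_zero ?_ ?_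
    · rw [add_right_comm]; exact Set.add_mem_add hd.add_mem hq'
    · rw [neg_smul, ← add_assoc, add_neg_cancel_right]; exact hv.1
  rw [hnonneg.antisymm' (neg_nonneg.1 hnonpos), zero_smul, add_zero]

lemma ncard_verticesChargedTo_le {P Q : Set E} (hP : (P.extremePoints 𝕜).Finite) :
    (verticesChargedTo b P Q).ncard ≤ (P.extremePoints 𝕜).ncard := by
  choose! p hp q hq hpq d hd hmin using fun v (hv : v ∈ verticesChargedTo b P Q) ↦ hv.2
  have hext : ∀ v ∈ verticesChargedTo b P Q, p v + q v ∈ (P + Q).extremePoints 𝕜 :=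
    fun v hv ↦ (hpq v hv).symm ▸ hv.1
  have hmaps : ∀ v ∈ verticesChargedTo b P Q, p v ∈ P.extremePoints 𝕜 := fun v hv ↦
    left_mem_extremePoints_of_add (hp v hv) (hq v hv) (hext v hv)
  refine Set.ncard_le_ncard_of_injOn p hmaps (fun v hv w hw hvw ↦ ?_) hP
  obtain ⟨t, ht, hdt⟩ := (hd v hv).exists_pos_smul (hmaps v hv) (hvw ▸ hd w hw)
  have hmin' : IsMinOn (signedArea b (d v)) Q (q w) :=
    (isMinOn_signedArea_smul_iff ht).1 (hdt ▸ hmin w hw)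
  have hqvw : q v = q w := (hd v hv).eq_of_isMinOn (hq v hv) (hq w hw) (hext v hv)
    (hvw ▸ hext w hw) (hmin v hv) hmin'
  rw [← hpq v hv, ← hpq w hw, hvw, hqvw]

lemma IsCcwEdge.left_or_right_of_add {P Q : Set E} {p q d : E} (hp : p ∈ P) (hq : q ∈ Q)
    (h : IsCcwEdge b (P + Q) (p + q) d) :
    (∃ a, IsCcwEdge b P p a ∧ IsMinOn (signedArea b a) Q q) ∨
      ∃ a, IsCcwEdge b Q q a ∧ IsMinOn (signedArea b a) P p := by
  have hminP : IsMinOn (signedArea b d) P p := isMinOn_left_of_add hq h.isMinOn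
  have hminQ : IsMinOn (signedArea b d) Q q := isMinOn_left_of_add hp (by
    rw [add_comm Q, add_comm q]; exact h.isMinOn)
  obtain ⟨p', hp', q', hq', hpq : p' + q' = p + q + d⟩ := h.add_mem
  have hq'_eq : q' = q + (d - (p' - p)) := by rw [← sub_eq_iff_eq_add'.2 hpq.symm]; abel
  have hzero : signedArea b d (p' - p) = 0 := by
    refine le_antisymm ?_ (by simpa using hminP hp')
    have := hminQ hq'
    rw [hq'_eq, Set.mem_ofPred_eq, map_add, map_sub, signedArea_self] at this
    linarith
  obtain ⟨t, ht⟩ := exists_eq_smul_of_signedArea_eq_zero h.ne_zero hzero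
  have hpt : p + t • d ∈ P := by rwa [← ht, add_sub_cancel]
  have hqt : q + (1 - t) • d ∈ Q := by rwa [sub_smul, one_smul, ← ht, ← hq'_eq]
  rcases lt_or_ge 0 t with hpos | hnonpos
  · exact .inl ⟨t • d, .smul hpos h.ne_zero hpt hminP,
      (isMinOn_signedArea_smul_iff hpos).2 hminQ⟩
  · have hpos : 0 < 1 - t := by linarith
    exact .inr ⟨(1 - t) • d, .smul hpos h.ne_zero hqt hminQ,
      (isMinOn_signedArea_smul_iff hpos).2 hminP⟩

lemma extremePoints_add_eq_verticesChargedTo_union {P Q : Set E}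
    (hedge : ∀ v ∈ (P + Q).extremePoints 𝕜, ∃ d, IsCcwEdge b (P + Q) v d) :
    (P + Q).extremePoints 𝕜 = verticesChargedTo b P Q ∪ verticesChargedTo b Q P := by
  refine subset_antisymm (fun v hv ↦ ?_)
    (Set.union_subset (Set.sep_subset _ _) (add_comm P Q ▸ Set.sep_subset _ _))
  obtain ⟨d, hd⟩ := hedge v hv
  obtain ⟨p, hp, q, hq, rfl⟩ := hv.1
  rcases hd.left_or_right_of_add hp hq with hleft | hright
  · exact .inl ⟨hv, p, hp, q, hq, rfl, hleft⟩
  · exact .inr ⟨add_comm P Q ▸ hv, q, hq, p, hp, add_comm q p, hright⟩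

end Edges

section Polygons

variable {𝕜 E : Type*} [Field 𝕜] [LinearOrder 𝕜] [IsStrictOrderedRing 𝕜] [AddCommGroup E]
  [Module 𝕜 E]

lemma ncard_extremePoints_convexHull_add_le (hE : Module.finrank 𝕜 E = 2) {S T : Set E}
    (hS : S.Finite) (hT : T.Finite) :
    ((convexHull 𝕜 S + convexHull 𝕜 T).extremePoints 𝕜).ncard ≤
      ((convexHull 𝕜 S).extremePoints 𝕜).ncard + ((convexHull 𝕜 T).extremePoints 𝕜).ncard := by
  have : Module.Finite 𝕜 E := Module.finite_of_finrank_pos (by omega)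
  let b : Module.Basis (Fin 2) 𝕜 E := Module.finBasisOfFinrankEq 𝕜 E hE
  have hextS := finite_extremePoints_convexHull (𝕜 := 𝕜) hS
  have hextT := finite_extremePoints_convexHull (𝕜 := 𝕜) hT
  rcases (S + T).subsingleton_or_nontrivial with hsub | hnontriv
  · refine (ncard_extremePoints_add_le_of_subsingleton ?_ hextS).trans (Nat.le_add_right _ _)
    rw [← convexHull_add]
    exact hsub.anti extremePoints_convexHull_subset
  have hedge : ∀ v ∈ (convexHull 𝕜 S + convexHull 𝕜 T).extremePoints 𝕜,
      ∃ d, IsCcwEdge b (convexHull 𝕜 S + convexHull 𝕜 T) v d := by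
    rw [← convexHull_add]
    exact fun v ↦ exists_isCcwEdge_convexHull (hS.add hT) hnontriv
  rw [extremePoints_add_eq_verticesChargedTo_union hedge]
  exact (Set.ncard_union_le _ _).trans
    (add_le_add (ncard_verticesChargedTo_le hextS) (ncard_verticesChargedTo_le hextT))

theorem ncard_extremePoints_finset_minkowski_sum_polygons_general
    (hE : Module.finrank 𝕜 E = 2) {ι : Type*} {I : Finset ι} (hI : I.Nonempty) {s : ι → Set E}
    (hs : ∀ i ∈ I, (s i).Finite) :
    ((∑ i ∈ I, convexHull 𝕜 (s i)).extremePoints 𝕜).ncard ≤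
      ∑ i ∈ I, ((convexHull 𝕜 (s i)).extremePoints 𝕜).ncard := by
  induction hI using Finset.Nonempty.cons_induction with
  | singleton i => simp only [Finset.sum_singleton, le_refl]
  | cons i J hi _ ih =>
    obtain ⟨hsi, hsJ⟩ := (Finset.forall_mem_cons hi _).1 hs
    have hsum : (∑ j ∈ J, s j).Finite :=
      Finset.sum_induction s Set.Finite (fun _ _ ↦ .add) Set.finite_zero hsJ
    have hadd := ncard_extremePoints_convexHull_add_le hE hsi hsum
    rw [convexHull_sum] at hadd
    rw [Finset.sum_cons, Finset.sum_cons]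
    exact hadd.trans (Nat.add_le_add_left (ih hsJ) _)

end Polygons

theorem ncard_extremePoints_finset_minkowski_sum_polygons {ι : Type*} (I : Finset ι)
    (hI : I.Nonempty) (s : ι → Set (EuclideanSpace ℝ (Fin 2)))
    (hs : ∀ i ∈ I, (s i).Finite) (P : ι → Set (EuclideanSpace ℝ (Fin 2)))
    (hP : ∀ i ∈ I, P i = convexHull ℝ (s i)) :
    Set.ncard (Set.extremePoints ℝ (∑ i ∈ I, P i)) ≤
      ∑ i ∈ I, Set.ncard (Set.extremePoints ℝ (P i)) := by
  have hcard : ∀ i ∈ I, ((P i).extremePoints ℝ).ncard =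
      ((convexHull ℝ (s i)).extremePoints ℝ).ncard := fun i hi ↦ by rw [hP i hi]
  rw [Finset.sum_congr rfl hP, Finset.sum_congr rfl hcard]
  exact ncard_extremePoints_finset_minkowski_sum_polygons_general finrank_euclideanSpace_fin hI hs
end
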